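/- The 4-arity CNOT1 gate G = |0000⟩ + |0110⟩ + |1011⟩ + |1101⟩ is not Pfaffian under any homogeneous change of basis: there do not exist an invertible 2×2 complex matrix A, a scalar α ∈ ℂ, and a skew-symmetric matrix Ξ ∈ ℂ^{4×4} such that (A⊗A⊗A⊗A)G = α·sPf(Ξ). -/

import Mathlib

/-!
Only the vanishing of the odd-support coordinates of a sub-Pfaffian vector is needed
(`sPf_eq_zero_of_odd`). Write `A = !![p, q; r, s]`. The coordinates of the transformed gate at
`0010`, `1011`, `0001` and `0111` must vanish. The first two form a homogeneous linear system in
`pr + qs` and `ps + qr`, and invertibility of `A` forces `pr + qs = ps + qr = 0`; in particular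
all entries of `A` are nonzero. Modulo `pr + qs = 0` the last two coordinates are `pr(p - q)²` and
`pr(r - s)²`, so `p = q` and `r = s`, contradicting invertibility
(`odd_coordinates_incompatible`).
-/

open scoped BigOperators

noncomputable section

/-- Change of basis on an `n`-arity gate: `((A₁⊗…⊗Aₙ)G)(b) = Σ_c (∏ᵢ Aᵢ(bᵢ,cᵢ))·G(c)`. -/
def cobGate {n : ℕ} (A : Fin n → Matrix (Fin 2) (Fin 2) ℂ) (G : (Fin n → Fin 2) → ℂ) :
    (Fin n → Fin 2) → ℂ :=
  fun b => ∑ c : Fin n → Fin 2, (∏ i, A i (b i) (c i)) * G c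

/-- Change of basis on an `n`-arity cogate: `C′(b) = Σ_c C(c)·∏ᵢ Aᵢ⁻¹(cᵢ,bᵢ)`. -/
def cobCogate {n : ℕ} (A : Fin n → Matrix (Fin 2) (Fin 2) ℂ) (C : (Fin n → Fin 2) → ℂ) :
    (Fin n → Fin 2) → ℂ :=
  fun b => ∑ c : Fin n → Fin 2, C c * ∏ i, (A i)⁻¹ (c i) (b i)

/-- The standard basis vector (ket/bra) at the bitstring `v`. -/
def ket {n : ℕ} (v : Fin n → Fin 2) : (Fin n → Fin 2) → ℂ :=
  fun b => if b = v then 1 else 0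

/-- The support of a bitstring. -/
def supp {n : ℕ} (b : Fin n → Fin 2) : Finset (Fin n) :=
  Finset.univ.filter fun i => b i = 1

/-- Fuel-driven Laplace expansion of the Pfaffian of a principal submatrix. -/
def subPfAux {n : ℕ} (Ξ : Matrix (Fin n) (Fin n) ℂ) : ℕ → Finset (Fin n) → ℂ
  | 0, I => if I = ∅ then 1 else 0
  | fuel + 1, I =>
    if hI : I.Nonempty then
      if Odd I.card then 0
      else
        ∑ i ∈ I.erase (I.min' hI),
          (-1 : ℂ) ^ (I.filter fun j => j ≤ i).card * Ξ (I.min' hI) i *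
            subPfAux Ξ fuel ((I.erase (I.min' hI)).erase i)
    else 1

/-- `subPf Ξ I` is the Pfaffian `Pf(Ξ|_I)` of the principal submatrix of `Ξ` on the
rows and columns in `I` (`1` on the empty set, `0` for odd `|I|`). -/
def subPf {n : ℕ} (Ξ : Matrix (Fin n) (Fin n) ℂ) (I : Finset (Fin n)) : ℂ :=
  subPfAux Ξ I.card I

/-- The sub-Pfaffian vector: coordinate `Pf(Ξ|_I)` at the bitstring with support `I`. -/
def sPf {n : ℕ} (Ξ : Matrix (Fin n) (Fin n) ℂ) : (Fin n → Fin 2) → ℂ :=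
  fun b => subPf Ξ (supp b)

/-- The dual sub-Pfaffian vector: coordinate `Pf(Θ|_{Jᶜ})` at the bitstring with support `J`. -/
def sPfStar {n : ℕ} (Θ : Matrix (Fin n) (Fin n) ℂ) : (Fin n → Fin 2) → ℂ :=
  fun b => subPf Θ (supp b)ᶜ

/-- A matrix is skew-symmetric. -/
def IsSkew {n : ℕ} (Ξ : Matrix (Fin n) (Fin n) ℂ) : Prop :=
  ∀ i j, Ξ j i = -Ξ i j

/-- A gate is Pfaffian under the change of basis `M`. -/
def IsPfaffGate {n : ℕ} (M : Fin n → Matrix (Fin 2) (Fin 2) ℂ) (G : (Fin n → Fin 2) → ℂ) : Prop :=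
  ∃ (α : ℂ) (Ξ : Matrix (Fin n) (Fin n) ℂ), IsSkew Ξ ∧ cobGate M G = fun b => α * sPf Ξ b

/-- A cogate is Pfaffian under the change of basis `M`. -/
def IsPfaffCogate {n : ℕ} (M : Fin n → Matrix (Fin 2) (Fin 2) ℂ) (C : (Fin n → Fin 2) → ℂ) : Prop :=
  ∃ (β : ℂ) (Θ : Matrix (Fin n) (Fin n) ℂ), IsSkew Θ ∧ cobCogate M C = fun b => β * sPfStar Θ b

/-- The 4-arity CNOT1 gate. -/
def cnot1 : (Fin 4 → Fin 2) → ℂ :=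
  ket ![0, 0, 0, 0] + ket ![0, 1, 1, 0] + ket ![1, 0, 1, 1] + ket ![1, 1, 0, 1]

theorem sPf_eq_zero_of_odd {n : ℕ} (Ξ : Matrix (Fin n) (Fin n) ℂ) (b : Fin n → Fin 2)
    (hb : Odd (supp b).card) : sPf Ξ b = 0 := by
  unfold sPf subPf
  have hne : (supp b).Nonempty := Finset.card_pos.mp hb.pos
  obtain ⟨k, hk⟩ := Nat.exists_eq_succ_of_ne_zero hb.pos.ne'
  rw [hk]
  simp [subPfAux, hne, hb]

theorem cobGate_cnot1 (A : Matrix (Fin 2) (Fin 2) ℂ) (b : Fin 4 → Fin 2) :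
    cobGate ![A, A, A, A] cnot1 b =
      A (b 0) 0 * A (b 1) 0 * A (b 2) 0 * A (b 3) 0 +
      A (b 0) 0 * A (b 1) 1 * A (b 2) 1 * A (b 3) 0 +
      A (b 0) 1 * A (b 1) 0 * A (b 2) 1 * A (b 3) 1 +
      A (b 0) 1 * A (b 1) 1 * A (b 2) 0 * A (b 3) 1 := by
  simp only [cobGate, cnot1, ket, Pi.add_apply, mul_add, Finset.sum_add_distrib, mul_ite, mul_one,
    mul_zero, Finset.sum_ite_eq', Finset.mem_univ, if_true]
  simp only [Fin.prod_univ_four, Matrix.cons_val]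

/-- The coordinates at `0010`, `1011`, `0001`, `0111` cannot all vanish for an invertible
matrix `!![p, q; r, s]`. -/
theorem odd_coordinates_incompatible (p q r s : ℂ) (hdet : p * s - q * r ≠ 0)
    (h0010 : p ^ 2 * (p * r + q * s) + q ^ 2 * (p * s + q * r) = 0)
    (h1011 : r ^ 2 * (p * r + q * s) + s ^ 2 * (p * s + q * r) = 0)
    (h0001 : p * r * (p ^ 2 + q ^ 2) + q * s * (2 * p * q) = 0)
    (h0111 : p * r * (r ^ 2 + s ^ 2) + q * s * (2 * r * s) = 0) : False := by
  have hO : p * s + q * r = 0 := by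
    -- eliminating `pr + qs` leaves `(ps - qr)(ps + qr)² = 0`
    have h : (p * s - q * r) * (p * s + q * r) ^ 2 = 0 := by
      linear_combination p ^ 2 * h1011 - r ^ 2 * h0010
    simpa [hdet] using h
  have hE : p * r + q * s = 0 := by
    by_contra hne
    have hp : p = 0 := by simpa [hO, hne] using h0010
    have hr : r = 0 := by simpa [hO, hne] using h1011
    exact hdet (by simp [hp, hr])
  have hps : p * s ≠ 0 := fun h => hdet (by linear_combination 2 * h - hO)
  have hqr : q * r ≠ 0 := fun h => hdet (by linear_combination hO - 2 * h)
  have hp : p ≠ 0 := left_ne_zero_of_mul hps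
  have hr : r ≠ 0 := right_ne_zero_of_mul hqr
  -- substituting `qs = -pr` turns the last two coordinates into multiples of squares
  have hpq : p - q = 0 := by
    have h : p * r * (p - q) ^ 2 = 0 := by linear_combination h0001 - 2 * p * q * hE
    simpa [hp, hr] using h
  have hrs : r - s = 0 := by
    have h : p * r * (r - s) ^ 2 = 0 := by linear_combination h0111 - 2 * r * s * hE
    simpa [hp, hr] using h
  exact hdet (by linear_combination p * (-hrs) + r * hpq)

/-- Theorem 5.3.1: CNOT1 is not Pfaffian under any homogeneous change of basis. -/
theorem stmt14 :
    ¬ ∃ (A : Matrix (Fin 2) (Fin 2) ℂ) (α : ℂ) (Ξ : Matrix (Fin 4) (Fin 4) ℂ),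
      IsUnit A.det ∧ IsSkew Ξ ∧
      cobGate ![A, A, A, A] cnot1 = fun b => α * sPf Ξ b := by
  rintro ⟨A, α, Ξ, hA, -, hG⟩
  have hodd (b : Fin 4 → Fin 2) (hb : Odd (supp b).card) :
      cobGate ![A, A, A, A] cnot1 b = 0 := by
    rw [hG]
    simp [sPf_eq_zero_of_odd Ξ b hb]
  have h1 := hodd ![0, 0, 1, 0] (by decide)
  have h2 := hodd ![1, 0, 1, 1] (by decide)
  have h3 := hodd ![0, 0, 0, 1] (by decide)
  have h4 := hodd ![0, 1, 1, 1] (by decide)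
  simp only [cobGate_cnot1, Matrix.cons_val] at h1 h2 h3 h4
  rw [Matrix.det_fin_two] at hA
  exact odd_coordinates_incompatible (A 0 0) (A 0 1) (A 1 0) (A 1 1) hA.ne_zero
    (by linear_combination h1) (by linear_combination h2)
    (by linear_combination h3) (by linear_combination h4)
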